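/- arXiv:2207.14518 — 11 statements merged into one kernel-verified Lean document; each statement's English description precedes it below -/
import Mathlib

section
/- Let M be a finitely generated free ℤ-module equipped with an even symmetric bilinear form B : M × M → ℤ. Suppose c ∈ M satisfies B(c,c) = 0 and the map v ↦ B(c,v) is surjective from M onto ℤ. Then there exists b ∈ M with B(b,b) = 0 and B(c,b) = 1 such that, setting U = ℤc + ℤb and K = {v ∈ M : B(v,c) = 0 and B(v,b) = 0}, the module M is the internal direct sum of U and K, and U and K are orthogonal with respect to B (so M splits off a hyperbolic plane containing c). -/
/-- Let `M` be a finitely generated free `ℤ`-module equipped with an even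
symmetric bilinear form `B`. If `c ∈ M` is isotropic (`B c c = 0`) and the map `v ↦ B c v`
is surjective onto `ℤ`, then there is `b ∈ M` with `B b b = 0` and `B c b = 1` such that `M`
is the internal direct sum of `U = ℤc + ℤb` and `K = {v | B v c = 0 ∧ B v b = 0}`,
with `U` and `K` orthogonal. -/
theorem fake_monster.stmt0 {M : Type*} [AddCommGroup M] [Module ℤ M]
    [Module.Free ℤ M] [Module.Finite ℤ M]
    (B : M →ₗ[ℤ] M →ₗ[ℤ] ℤ)
    (hsymm : ∀ v w : M, B v w = B w v)
    (heven : ∀ v : M, 2 ∣ B v v)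
    (c : M) (hc : B c c = 0)
    (hsurj : Function.Surjective fun v : M => B c v) :
    ∃ b : M, B b b = 0 ∧ B c b = 1 ∧
      (Submodule.span ℤ ({c, b} : Set M)) ⊓
          (LinearMap.ker (B.flip c) ⊓ LinearMap.ker (B.flip b)) = ⊥ ∧
      (Submodule.span ℤ ({c, b} : Set M)) ⊔
          (LinearMap.ker (B.flip c) ⊓ LinearMap.ker (B.flip b)) = ⊤ ∧
      ∀ u ∈ Submodule.span ℤ ({c, b} : Set M),
        ∀ k ∈ LinearMap.ker (B.flip c) ⊓ LinearMap.ker (B.flip b), B u k = 0 := by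
  rename_i i1 i2 i3 i4
  obtain rfl : i2 = AddCommGroup.toIntModule M := Subsingleton.elim _ _
  obtain ⟨w, hw⟩ := hsurj 1
  obtain ⟨t, ht⟩ := heven w
  have hw : B c w = 1 := hw
  have hw' : B w c = 1 := (hsymm w c).trans hw
  obtain ⟨b, hb⟩ : ∃ b, b = w - t • c := ⟨_, rfl⟩
  have hbb : B b b = 0 := by
    simp only [hb, LinearMap.map_sub, LinearMap.map_smul, LinearMap.sub_apply,
      LinearMap.smul_apply, smul_eq_mul, hc, hw, hw', ht]
    ring
  have hcb : B c b = 1 := by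
    simp only [hb, LinearMap.map_sub, LinearMap.map_smul, smul_eq_mul, hc, hw]
    ring
  have hbc : B b c = 1 := (hsymm b c).trans hcb
  refine ⟨b, hbb, hcb, ?_, ?_, ?_⟩
  · rw [eq_bot_iff]
    rintro v ⟨hv, h1, h2⟩
    obtain ⟨x, y, rfl⟩ := Submodule.mem_span_pair.1 hv
    have h1 : B (x • c + y • b) c = 0 := h1
    have h2 : B (x • c + y • b) b = 0 := h2
    simp only [LinearMap.map_add, LinearMap.map_smul, LinearMap.add_apply,
      LinearMap.smul_apply, smul_eq_mul, hc, hbb, hcb, hbc] at h1 h2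
    have hx : x = 0 := by linarith
    have hy : y = 0 := by linarith
    subst hx hy
    rw [Submodule.mem_bot, zero_smul, zero_smul, add_zero]
  · rw [eq_top_iff]
    intro v _
    refine Submodule.mem_sup.2 ⟨B v b • c + B v c • b,
      Submodule.mem_span_pair.2 ⟨_, _, rfl⟩, v - (B v b • c + B v c • b), ⟨?_, ?_⟩, by abel⟩
    · change B (v - (B v b • c + B v c • b)) c = 0
      simp only [LinearMap.map_sub, LinearMap.map_add, LinearMap.map_smul, LinearMap.add_apply,
        LinearMap.sub_apply, LinearMap.smul_apply, smul_eq_mul, hc, hbc]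
      ring
    · change B (v - (B v b • c + B v c • b)) b = 0
      simp only [LinearMap.map_sub, LinearMap.map_add, LinearMap.map_smul, LinearMap.add_apply,
        LinearMap.sub_apply, LinearMap.smul_apply, smul_eq_mul, hbb, hcb]
      ring
  · rintro u hu k ⟨h1, h2⟩
    obtain ⟨x, y, rfl⟩ := Submodule.mem_span_pair.1 hu
    have h1 : B k c = 0 := h1
    have h2 : B k b = 0 := h2
    rw [hsymm, LinearMap.map_add, LinearMap.map_smul, LinearMap.map_smul, h1, h2]
    simp
end

section
/- Let V be a finite-dimensional ℚ-vector space with a nondegenerate symmetric bilinear form B, and let M be a maximal even lattice in V. Then for every primitive vector c ∈ M with B(c,c) = 0 there exists v ∈ M with B(c,v) = 1; that is, the image B(c,M) of M under pairing with c is all of ℤ. -/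
/-- An even lattice in a `ℚ`-vector space `V` (with respect to a bilinear form `B`):
a finitely generated `ℤ`-submodule that spans `V` over `ℚ`, on which `B` takes integer
values and takes even values on the diagonal. -/
def IsEvenLattice {V : Type*} [AddCommGroup V] [Module ℚ V]
    (B : V →ₗ[ℚ] V →ₗ[ℚ] ℚ) (M : Submodule ℤ V) : Prop :=
  M.FG ∧ Submodule.span ℚ (M : Set V) = ⊤ ∧
    (∀ v ∈ M, ∀ w ∈ M, ∃ n : ℤ, B v w = (n : ℚ)) ∧
    (∀ v ∈ M, ∃ n : ℤ, B v v = 2 * (n : ℚ))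

/-- Let `M` be a maximal even lattice in a finite-dimensional `ℚ`-vector
space with nondegenerate symmetric bilinear form `B`. Then for every primitive vector
`c ∈ M` with `B c c = 0` there exists `v ∈ M` with `B c v = 1`. -/
theorem fake_monster.stmt1 {V : Type*} [AddCommGroup V] [Module ℚ V]
    [FiniteDimensional ℚ V]
    (B : V →ₗ[ℚ] V →ₗ[ℚ] ℚ)
    (hsymm : ∀ v w : V, B v w = B w v)
    (hnondeg : ∀ v : V, (∀ w : V, B v w = 0) → v = 0)
    (M : Submodule ℤ V)
    (hM : IsEvenLattice B M)
    (hmax : ∀ M' : Submodule ℤ V, IsEvenLattice B M' → M ≤ M' → M' = M)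
    (c : V) (hc : c ∈ M)
    (hprim : ∀ d : ℤ, 1 < d → ∀ v ∈ M, c ≠ d • v)
    (hiso : B c c = 0) :
    ∃ v ∈ M, B c v = 1 := by
  obtain ⟨hfg, hspan, hint, heven⟩ := hM
  have hc0 : c ≠ 0 := by
    intro h
    exact hprim 2 (by norm_num) 0 M.zero_mem (by simp [h])
  let I : Ideal ℤ :=
    { carrier := {k | ∃ v ∈ M, B c v = (k : ℚ)}
      zero_mem' := ⟨0, M.zero_mem, by simp⟩
      add_mem' := by
        rintro a b ⟨v, hv, hav⟩ ⟨w, hw, hbw⟩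
        exact ⟨v + w, M.add_mem hv hw, by rw [map_add, hav, hbw]; push_cast; rfl⟩
      smul_mem' := by
        rintro k a ⟨v, hv, hav⟩
        exact ⟨k • v, M.smul_mem k hv, by rw [map_zsmul, hav]; simp⟩ }
  have hmemI : ∀ k : ℤ, k ∈ I ↔ ∃ v ∈ M, B c v = (k : ℚ) := fun k => Iff.rfl
  obtain ⟨g, hg⟩ := (IsPrincipalIdealRing.principal I).principal
  have hgI : ∀ k : ℤ, k ∈ I ↔ |g| ∣ k := by
    intro k
    rw [hg, abs_dvd]
    exact Ideal.mem_span_singleton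
  have hn0 : 0 ≤ |g| := abs_nonneg g
  generalize |g| = n at hgI hn0
  have hdiv : ∀ v ∈ M, ∃ k : ℤ, B c v = (n : ℚ) * k := by
    intro v hv
    obtain ⟨m, hm⟩ := hint c hc v hv
    obtain ⟨k, rfl⟩ := (hgI m).1 ((hmemI m).2 ⟨v, hv, hm⟩)
    exact ⟨k, by rw [hm]; push_cast; rfl⟩
  rcases (by omega : n = 0 ∨ n = 1 ∨ 1 < n) with h0 | h1 | h1
  · exfalso
    apply hc0
    apply hnondeg
    have hle : Submodule.span ℚ (M : Set V) ≤ LinearMap.ker (B c) := by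
      rw [Submodule.span_le]
      intro v hv
      obtain ⟨k, hk⟩ := hdiv v hv
      simp [hk, h0]
    intro w
    have : w ∈ Submodule.span ℚ (M : Set V) := by rw [hspan]; trivial
    exact hle this
  · subst h1
    obtain ⟨v, hv, h⟩ := (hmemI 1).1 ((hgI 1).2 dvd_rfl)
    exact ⟨v, hv, by simpa using h⟩
  · exfalso
    have hnq : (n : ℚ) ≠ 0 := by
      have : n ≠ 0 := by omega
      exact_mod_cast this
    let e : V := (n : ℚ)⁻¹ • c
    have hee : B e e = 0 := by simp [e, hiso]
    have heM : ∀ v ∈ M, ∃ k : ℤ, B e v = (k : ℚ) := by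
      intro v hv
      obtain ⟨k, hk⟩ := hdiv v hv
      exact ⟨k, by simp [e, hk, hnq]⟩
    have hmem : ∀ x ∈ M ⊔ Submodule.span ℤ {e}, ∃ v ∈ M, ∃ a : ℤ, x = v + a • e := by
      intro x hx
      obtain ⟨v, hv, y, hy, rfl⟩ := Submodule.mem_sup.1 hx
      obtain ⟨a, rfl⟩ := Submodule.mem_span_singleton.1 hy
      exact ⟨v, hv, a, rfl⟩
    have key : M ⊔ Submodule.span ℤ {e} = M := by
      apply hmax _ _ le_sup_left
      refine ⟨hfg.sup (Submodule.fg_span_singleton e), ?_, ?_, ?_⟩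
      · rw [eq_top_iff, ← hspan]
        exact Submodule.span_mono (fun x hx => Submodule.mem_sup_left hx)
      · intro x hx y hy
        obtain ⟨v, hv, a, rfl⟩ := hmem x hx
        obtain ⟨w, hw, b, rfl⟩ := hmem y hy
        obtain ⟨k, hk⟩ := hint v hv w hw
        obtain ⟨l, hl⟩ := heM v hv
        obtain ⟨m, hm⟩ := heM w hw
        refine ⟨k + b * l + a * m, ?_⟩
        simp only [map_add, map_zsmul, LinearMap.add_apply, LinearMap.smul_apply, hee, hk,
          hsymm v e, hl, hm, zsmul_eq_mul]
        push_cast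
        ring
      · intro x hx
        obtain ⟨v, hv, a, rfl⟩ := hmem x hx
        obtain ⟨k, hk⟩ := heven v hv
        obtain ⟨l, hl⟩ := heM v hv
        refine ⟨k + a * l, ?_⟩
        simp only [map_add, map_zsmul, LinearMap.add_apply, LinearMap.smul_apply, hee, hk,
          hsymm v e, hl, zsmul_eq_mul]
        push_cast
        ring
    have heIn : e ∈ M := by
      rw [← key]
      exact Submodule.mem_sup_right (Submodule.mem_span_singleton_self e)
    apply hprim n h1 e heIn
    rw [← Int.cast_smul_eq_zsmul ℚ n e]
    simp [e, smul_smul, hnq]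
end

section
/- Let V be a finite-dimensional ℚ-vector space with a nondegenerate symmetric bilinear form B, let M be a maximal even lattice in V, and let c ∈ M be a primitive vector with B(c,c) = 0. Then there exists b ∈ M with B(b,b) = 0 and B(c,b) = 1 such that M is the internal orthogonal direct sum of U = ℤc + ℤb and K = {v ∈ M : B(v,c) = 0 and B(v,b) = 0}; in particular M splits off a hyperbolic plane containing c. -/
/-- Let `M` be a maximal even lattice in a finite-dimensional `ℚ`-vector
space with nondegenerate symmetric bilinear form `B`, and let `c ∈ M` be primitive with
`B c c = 0`. Then there is `b ∈ M` with `B b b = 0` and `B c b = 1` such that `M` is the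
internal orthogonal direct sum of `U = ℤc + ℤb` and
`K = {v ∈ M : B v c = 0 ∧ B v b = 0}`. -/
theorem fake_monster.stmt2 {V : Type*} [AddCommGroup V] [Module ℚ V]
    [FiniteDimensional ℚ V]
    (B : V →ₗ[ℚ] V →ₗ[ℚ] ℚ)
    (hsymm : ∀ v w : V, B v w = B w v)
    (hnondeg : ∀ v : V, (∀ w : V, B v w = 0) → v = 0)
    (M : Submodule ℤ V)
    (hM : IsEvenLattice B M)
    (hmax : ∀ M' : Submodule ℤ V, IsEvenLattice B M' → M ≤ M' → M' = M)
    (c : V) (hc : c ∈ M)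
    (hprim : ∀ d : ℤ, 1 < d → ∀ v ∈ M, c ≠ d • v)
    (hiso : B c c = 0) :
    ∃ b ∈ M, B b b = 0 ∧ B c b = 1 ∧
      (Submodule.span ℤ ({c, b} : Set V)) ⊓
          (M ⊓ (LinearMap.ker (B.flip c)).restrictScalars ℤ
             ⊓ (LinearMap.ker (B.flip b)).restrictScalars ℤ) = ⊥ ∧
      (Submodule.span ℤ ({c, b} : Set V)) ⊔
          (M ⊓ (LinearMap.ker (B.flip c)).restrictScalars ℤ
             ⊓ (LinearMap.ker (B.flip b)).restrictScalars ℤ) = M ∧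
      ∀ u ∈ Submodule.span ℤ ({c, b} : Set V),
        ∀ k ∈ M ⊓ (LinearMap.ker (B.flip c)).restrictScalars ℤ
             ⊓ (LinearMap.ker (B.flip b)).restrictScalars ℤ, B u k = 0 := by
  obtain ⟨hfg, hspan, hBint, heven⟩ := hM
  have hc0 : c ≠ 0 := by
    intro h
    exact hprim 2 (by norm_num) 0 M.zero_mem (by simp [h])
  have zs : ∀ (n : ℤ) (v : V), n • v = (n : ℚ) • v := fun n v => (Int.cast_smul_eq_zsmul ℚ n v).symm
  let I : Submodule ℤ ℤ :=
    { carrier := {n | ∃ v ∈ M, B c v = (n : ℚ)}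
      add_mem' := by
        rintro a b ⟨v, hv, h⟩ ⟨w, hw, h'⟩
        exact ⟨v + w, M.add_mem hv hw, by rw [map_add, h, h']; push_cast; rfl⟩
      zero_mem' := ⟨0, M.zero_mem, by simp⟩
      smul_mem' := by
        rintro a b ⟨v, hv, h⟩
        refine ⟨a • v, M.smul_mem a hv, ?_⟩
        rw [zs, map_smul, h]
        simp }
  obtain ⟨d, hd⟩ := (IsPrincipalIdealRing.principal I).principal
  have hdI : d ∈ I := by rw [hd]; exact Submodule.mem_span_singleton_self d
  have hdv : ∀ v ∈ M, ∃ k : ℤ, B c v = (d : ℚ) * k := by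
    intro v hv
    obtain ⟨n, hn⟩ := hBint c hc v hv
    have : n ∈ I := ⟨v, hv, hn⟩
    rw [hd, Submodule.mem_span_singleton] at this
    obtain ⟨k, hk⟩ := this
    refine ⟨k, ?_⟩
    rw [hn, ← hk]
    push_cast [smul_eq_mul]
    ring
  have hd0 : (d : ℚ) ≠ 0 := by
    intro h0
    apply hc0
    apply hnondeg
    intro w
    have hle : Submodule.span ℚ (M : Set V) ≤ LinearMap.ker (B c) := by
      rw [Submodule.span_le]
      intro v hv
      obtain ⟨k, hk⟩ := hdv v hv
      simp [hk, h0]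
    rw [hspan] at hle
    exact hle (Submodule.mem_top (x := w))
  have hcc : ∀ v ∈ M, ∃ k : ℤ, B ((d : ℚ)⁻¹ • c) v = k := by
    intro v hv
    obtain ⟨k, hk⟩ := hdv v hv
    refine ⟨k, ?_⟩
    rw [map_smul, LinearMap.smul_apply, hk, smul_eq_mul]
    field_simp
  set e : V := (d : ℚ)⁻¹ • c with he
  have hee : B e e = 0 := by simp [he, hiso]
  have heM : e ∈ M := by
    have hle : M ≤ M ⊔ Submodule.span ℤ {e} := le_sup_left
    have key : IsEvenLattice B (M ⊔ Submodule.span ℤ {e}) := by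
      refine ⟨hfg.sup (Submodule.fg_span_singleton e), ?_, ?_, ?_⟩
      · rw [eq_top_iff, ← hspan]
        exact Submodule.span_mono hle
      · intro v hv' w hw'
        obtain ⟨v, hv, x, hx, rfl⟩ := Submodule.mem_sup.1 hv'
        obtain ⟨w, hw, y, hy, rfl⟩ := Submodule.mem_sup.1 hw'
        obtain ⟨a, rfl⟩ := Submodule.mem_span_singleton.1 hx
        obtain ⟨b, rfl⟩ := Submodule.mem_span_singleton.1 hy
        obtain ⟨n, hn⟩ := hBint v hv w hw
        obtain ⟨k, hk⟩ := hcc v hv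
        obtain ⟨l, hl⟩ := hcc w hw
        refine ⟨n + b * k + a * l, ?_⟩
        rw [zs, zs]
        simp only [map_add, map_smul, LinearMap.add_apply, LinearMap.smul_apply, smul_eq_mul,
          hsymm v e, hn, hk, hl, hee]
        push_cast
        ring
      · intro v hv'
        obtain ⟨v, hv, x, hx, rfl⟩ := Submodule.mem_sup.1 hv'
        obtain ⟨a, rfl⟩ := Submodule.mem_span_singleton.1 hx
        obtain ⟨n, hn⟩ := heven v hv
        obtain ⟨k, hk⟩ := hcc v hv
        refine ⟨n + a * k, ?_⟩
        rw [zs]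
        simp only [map_add, map_smul, LinearMap.add_apply, LinearMap.smul_apply, smul_eq_mul,
          hsymm v e, hn, hk, hee]
        push_cast
        ring
    rw [← hmax _ key hle]
    exact Submodule.mem_sup_right (Submodule.mem_span_singleton_self e)
  have hce : c = d • e := by
    rw [zs, he, smul_smul, mul_inv_cancel₀ hd0, one_smul]
  have hd1 : ¬ 1 < d := fun h => hprim d h e heM hce
  have hd2 : ¬ 1 < -d := fun h => hprim (-d) h (-e) (M.neg_mem heM) (by simpa using hce)
  have hd0' : d ≠ 0 := by exact_mod_cast hd0
  have h1 : (1 : ℤ) ∈ I := by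
    have : d = 1 ∨ d = -1 := by omega
    rcases this with h | h
    · rwa [h] at hdI
    · rw [h] at hdI
      simpa using I.neg_mem hdI
  obtain ⟨b₀, hb₀, hcb₀⟩ := h1
  obtain ⟨n, hn⟩ := heven b₀ hb₀
  rw [Int.cast_one] at hcb₀
  obtain ⟨b, hbM, hbb, hcb⟩ : ∃ b ∈ M, B b b = 0 ∧ B c b = 1 := by
    refine ⟨b₀ - n • c, M.sub_mem hb₀ (M.smul_mem n hc), ?_, ?_⟩
    · rw [zs]
      simp only [map_sub, map_smul, LinearMap.sub_apply, LinearMap.smul_apply, smul_eq_mul,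
          hsymm b₀ c, hn, hcb₀, hiso]
      ring
    · rw [zs]
      simp only [map_sub, map_smul, smul_eq_mul, hcb₀, hiso]
      ring
  have hbc : B b c = 1 := by rw [hsymm, hcb]
  refine ⟨b, hbM, hbb, hcb, ?_, ?_, ?_⟩
  · rw [eq_bot_iff]
    rintro u ⟨hu, ⟨-, hu1⟩, hu2⟩
    obtain ⟨x, y, rfl⟩ := Submodule.mem_span_pair.1 hu
    have h1 : B (x • c + y • b) c = 0 := hu1
    have h2 : B (x • c + y • b) b = 0 := hu2
    rw [zs, zs] at h1 h2
    simp only [map_add, map_smul, LinearMap.add_apply, LinearMap.smul_apply, smul_eq_mul,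
      hiso, hbb, hcb, hbc, mul_zero, mul_one, zero_add, add_zero] at h1 h2
    rw [zs, zs, h1, h2]
    simp
  · apply le_antisymm
    · refine sup_le ?_ (inf_le_left.trans inf_le_left)
      rw [Submodule.span_le]
      rintro z (rfl | rfl)
      · exact hc
      · exact hbM
    · intro v hv
      obtain ⟨p, hp⟩ := hBint v hv c hc
      obtain ⟨q, hq⟩ := hBint v hv b hbM
      refine Submodule.mem_sup.2 ⟨q • c + p • b, Submodule.mem_span_pair.2 ⟨q, p, rfl⟩,
        v - (q • c + p • b), ⟨⟨?_, ?_⟩, ?_⟩, by abel⟩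
      · exact M.sub_mem hv (M.add_mem (M.smul_mem _ hc) (M.smul_mem _ hbM))
      · change B (v - (q • c + p • b)) c = 0
        rw [zs, zs]
        simp [hp, hiso, hbc]
      · change B (v - (q • c + p • b)) b = 0
        rw [zs, zs]
        simp [hq, hbb, hcb]
  · rintro u hu k ⟨⟨-, hk1⟩, hk2⟩
    obtain ⟨x, y, rfl⟩ := Submodule.mem_span_pair.1 hu
    have h1 : B k c = 0 := hk1
    have h2 : B k b = 0 := hk2
    rw [hsymm, zs, zs]
    simp [h1, h2]
end

section
/- Let p be a prime number and a a positive integer. Then p^(a-1) + 24 = p^(a+1) if and only if (p,a) = (2,4), (p,a) = (3,2), or (p,a) = (5,1). -/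
/-- For a prime `p` and a positive integer `a`,
`p^(a-1) + 24 = p^(a+1)` holds iff `(p,a)` is `(2,4)`, `(3,2)` or `(5,1)`. -/
theorem fake_monster.stmt4 (p a : ℕ) (hp : p.Prime) (ha : 1 ≤ a) :
    p ^ (a - 1) + 24 = p ^ (a + 1) ↔
      (p = 2 ∧ a = 4) ∨ (p = 3 ∧ a = 2) ∨ (p = 5 ∧ a = 1) := by
  constructor
  · intro h
    obtain ⟨b, rfl⟩ : ∃ b, a = b + 1 := ⟨a - 1, by omega⟩
    have h2 := hp.two_le
    have h' : p ^ b + 24 = p ^ b * p ^ 2 := by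
      rw [← pow_add]; simpa using h
    have hpos : 1 ≤ p ^ b := Nat.one_le_pow _ _ (by omega)
    have hp5 : p ≤ 5 := by
      by_contra hc
      have h36 : 36 ≤ p ^ 2 := by nlinarith
      nlinarith
    have hb : b < 4 := by
      by_contra hc
      have h16 : 2 ^ 4 ≤ p ^ b :=
        (Nat.pow_le_pow_right (by norm_num) (by omega)).trans (Nat.pow_le_pow_left h2 b)
      have h4 : 4 ≤ p ^ 2 := by nlinarith
      nlinarith
    clear h hpos ha
    interval_cases p <;> interval_cases b <;> simp_all <;> revert hp <;> norm_num
  · rintro (⟨rfl, rfl⟩ | ⟨rfl, rfl⟩ | ⟨rfl, rfl⟩) <;> norm_num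
end

section
/- Let N be a positive integer and let x be a complex number with |x| < 1. Then the sum of xⁿ/n over all positive integers n coprime to N equals -∑_{b | N} (μ(b)/b)·log(1 - x^b), where the sum on the right ranges over the positive divisors b of N and log is the principal branch of the complex logarithm. -/
open ArithmeticFunction in
/-- For a positive integer `N` and a complex number `x` with `|x| < 1`,
the sum of `xⁿ/n` over positive integers `n` coprime to `N` equals
`-∑_{b ∣ N} (μ(b)/b)·log(1 - x^b)`, where `log` is the principal branch of the complex
logarithm and the sum ranges over the positive divisors `b` of `N`. -/
theorem fake_monster.stmt8 (N : ℕ) (hN : 0 < N) (x : ℂ) (hx : ‖x‖ < 1) :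
    ∑' n : ℕ, (if 0 < n ∧ Nat.Coprime n N then x ^ n / (n : ℂ) else 0) =
      -∑ b ∈ N.divisors, ((moebius b : ℂ) / (b : ℂ)) * Complex.log (1 - x ^ b) := by
  have key : ∀ b ∈ N.divisors, HasSum
      (fun n : ℕ => (moebius b : ℂ) * (if b ∣ n then x ^ n / (n : ℂ) else 0))
      ((moebius b : ℂ) * ((1 / (b : ℂ)) * -Complex.log (1 - x ^ b))) := by
    intro b hb
    have hb0 : b ≠ 0 := (Nat.pos_of_mem_divisors hb).ne'
    apply HasSum.mul_left
    have hxb : ‖x ^ b‖ < 1 := by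
      rw [norm_pow]
      exact pow_lt_one₀ (norm_nonneg _) hx hb0
    have h := (Complex.hasSum_taylorSeries_neg_log hxb).mul_left (1 / (b : ℂ))
    have hinj : Function.Injective (fun n : ℕ => b * n) :=
      fun m n hmn => Nat.eq_of_mul_eq_mul_left (Nat.pos_of_ne_zero hb0) hmn
    rw [← hinj.hasSum_iff]
    · convert h using 1
      funext n
      simp only [Function.comp, dvd_mul_right, if_true, pow_mul, Nat.cast_mul]
      rw [div_mul_div_comm, one_mul]
    · intro n hn
      rw [if_neg]
      rintro ⟨k, rfl⟩
      exact hn ⟨k, rfl⟩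
  have h := hasSum_sum key
  have e : (-∑ b ∈ N.divisors, ((moebius b : ℂ) / (b : ℂ)) * Complex.log (1 - x ^ b)) =
      ∑ b ∈ N.divisors, (moebius b : ℂ) * ((1 / (b : ℂ)) * -Complex.log (1 - x ^ b)) := by
    rw [← Finset.sum_neg_distrib]
    refine Finset.sum_congr rfl fun b _ => ?_
    ring
  rw [e, ← h.tsum_eq]
  refine tsum_congr fun n => ?_
  rcases Nat.eq_zero_or_pos n with rfl | hn
  · simp
  have hm : ∑ b ∈ (n.gcd N).divisors, moebius b = if n.gcd N = 1 then 1 else 0 := by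
    rw [← coe_mul_zeta_apply, moebius_mul_coe_zeta, one_apply]
  have hd : (n.gcd N).divisors = N.divisors.filter (fun b => b ∣ n) := by
    ext b
    simp only [Nat.mem_divisors, Finset.mem_filter, Nat.dvd_gcd_iff]
    have : n.gcd N ≠ 0 := (Nat.gcd_pos_of_pos_left _ hn).ne'
    have hN0 : N ≠ 0 := hN.ne'
    tauto
  have hm' : (∑ b ∈ N.divisors.filter (fun b => b ∣ n), (moebius b : ℂ)) =
      if n.gcd N = 1 then 1 else 0 := by
    rw [← hd]
    exact_mod_cast congrArg (Int.cast : ℤ → ℂ) hm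
  simp only [mul_ite, mul_zero]
  rw [← Finset.sum_filter, ← Finset.sum_mul, hm']
  simp [hn, Nat.Coprime]
end

section
/- Let n be a positive integer and a an integer. Then the Ramanujan sum R(a,n) = ∑_{c ∈ (ℤ/nℤ)ˣ} exp(2πi·a·c/n), where the sum ranges over the units c of ℤ/nℤ, satisfies R(a,n) = ∑_{t | gcd(a,n)} t·μ(n/t), where the sum ranges over the positive common divisors t of a and n. -/
lemma aux_geom (m : ℕ) (hm : m ≠ 0) (a : ℤ) :
    ∑ k ∈ Finset.range m, Complex.exp (2 * Real.pi * Complex.I * (a : ℂ) * (k : ℂ) / (m : ℂ)) =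
      if (m : ℤ) ∣ a then (m : ℂ) else 0 := by
  have hm' : (m : ℂ) ≠ 0 := by exact_mod_cast hm
  have h1 : ∀ k : ℕ, Complex.exp (2 * Real.pi * Complex.I * (a : ℂ) * (k : ℂ) / (m : ℂ)) =
      (Complex.exp (2 * Real.pi * Complex.I * (a : ℂ) / (m : ℂ))) ^ k := by
    intro k
    rw [← Complex.exp_nat_mul]
    congr 1
    ring
  simp_rw [h1]
  have hpow : (Complex.exp (2 * Real.pi * Complex.I * (a : ℂ) / (m : ℂ))) ^ m = 1 := by
    rw [← Complex.exp_nat_mul, Complex.exp_eq_one_iff]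
    exact ⟨a, by field_simp⟩
  split_ifs with h
  · obtain ⟨b, rfl⟩ := h
    have : Complex.exp (2 * Real.pi * Complex.I * (((m : ℤ) * b : ℤ) : ℂ) / (m : ℂ)) = 1 := by
      rw [Complex.exp_eq_one_iff]
      exact ⟨b, by push_cast; field_simp⟩
    rw [this]
    simp
  · have hne : Complex.exp (2 * Real.pi * Complex.I * (a : ℂ) / (m : ℂ)) ≠ 1 := by
      intro h1
      rw [Complex.exp_eq_one_iff] at h1
      obtain ⟨b, hb⟩ := h1
      apply h
      refine ⟨b, ?_⟩
      have hpi := Complex.two_pi_I_ne_zero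
      have : (2 * Real.pi * Complex.I) * (a : ℂ) = (2 * Real.pi * Complex.I) * ((m : ℂ) * b) := by
        rw [div_eq_iff hm'] at hb
        rw [hb]; ring
      have := mul_left_cancel₀ hpi this
      exact_mod_cast this
    rw [geom_sum_eq hne, hpow]
    simp

lemma aux_units (n : ℕ) [NeZero n] (f : ℕ → ℂ) :
    ∑ c : (ZMod n)ˣ, f (c : ZMod n).val =
      ∑ c ∈ (Finset.range n).filter (fun c => c.Coprime n), f c := by
  refine Finset.sum_bij (fun c _ => (c : ZMod n).val) ?_ ?_ ?_ ?_
  · intro c _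
    simp only [Finset.mem_filter, Finset.mem_range]
    exact ⟨ZMod.val_lt _, ZMod.val_coe_unit_coprime c⟩
  · intro c _ d _ h
    exact Units.ext (ZMod.val_injective n h)
  · intro c hc
    simp only [Finset.mem_filter, Finset.mem_range] at hc
    refine ⟨ZMod.unitOfCoprime c hc.2, Finset.mem_univ _, ?_⟩
    rw [ZMod.coe_unitOfCoprime, ZMod.val_cast_of_lt hc.1]
  · intros; rfl

lemma aux_mult (d m : ℕ) (hd : d ≠ 0) (f : ℕ → ℂ) :
    ∑ c ∈ (Finset.range (d * m)).filter (fun c => d ∣ c), f c =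
      ∑ k ∈ Finset.range m, f (d * k) := by
  symm
  have hd0 := Nat.pos_of_ne_zero hd
  refine Finset.sum_bij (fun k _ => d * k) ?_ ?_ ?_ ?_
  · intro k hk
    simp only [Finset.mem_filter, Finset.mem_range] at hk ⊢
    exact ⟨Nat.mul_lt_mul_of_pos_left hk hd0, dvd_mul_right _ _⟩
  · intro c _ e _ h
    exact Nat.eq_of_mul_eq_mul_left hd0 h
  · intro c hc
    simp only [Finset.mem_filter, Finset.mem_range] at hc
    obtain ⟨h, k, rfl⟩ := hc
    exact ⟨k, Finset.mem_range.2 (Nat.lt_of_mul_lt_mul_left h), rfl⟩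
  · intros; rfl

lemma aux_ind (n c : ℕ) (hn : n ≠ 0) :
    (if c.Coprime n then (1 : ℂ) else 0) =
      ∑ d ∈ n.divisors, if d ∣ c then ((ArithmeticFunction.moebius d : ℤ) : ℂ) else 0 := by
  have hg : c.gcd n ≠ 0 := fun h => hn (Nat.gcd_eq_zero_iff.1 h).2
  have h1 : n.divisors.filter (fun d => d ∣ c) = (c.gcd n).divisors := by
    ext d
    simp only [Finset.mem_filter, Nat.mem_divisors, Nat.dvd_gcd_iff]
    tauto
  rw [← Finset.sum_filter, h1]
  have := ArithmeticFunction.coe_mul_zeta_apply (f := ArithmeticFunction.moebius) (x := c.gcd n)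
  rw [ArithmeticFunction.moebius_mul_coe_zeta, ArithmeticFunction.one_apply] at this
  rw [← Int.cast_sum, ← this]
  simp [Nat.Coprime]

open ArithmeticFunction in
/-- For a positive integer `n` and an integer `a`, the Ramanujan sum
`R(a,n) = ∑_{c ∈ (ℤ/nℤ)ˣ} exp(2πi·a·c/n)` equals `∑_{t ∣ gcd(a,n)} t·μ(n/t)`, where the
sum on the right ranges over the positive common divisors `t` of `a` and `n`
(that is, the divisors of `gcd(|a|, n)`). -/
theorem fake_monster.stmt9 (n : ℕ) [NeZero n] (a : ℤ) :
    ∑ c : (ZMod n)ˣ,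
        Complex.exp (2 * Real.pi * Complex.I * (a : ℂ) * (((c : ZMod n).val : ℕ) : ℂ) / (n : ℂ)) =
      ((∑ t ∈ (Nat.gcd a.natAbs n).divisors, (t : ℤ) * moebius (n / t) : ℤ) : ℂ) := by
  have hn : n ≠ 0 := NeZero.ne n
  rw [aux_units n (fun k => Complex.exp (2 * Real.pi * Complex.I * (a : ℂ) * (k : ℂ) / (n : ℂ)))]
  have hR : (Nat.gcd a.natAbs n).divisors = n.divisors.filter (fun t : ℕ => (t : ℤ) ∣ a) := by
    ext d
    simp only [Finset.mem_filter, Nat.mem_divisors, Nat.dvd_gcd_iff, Int.natCast_dvd, ne_eq,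
      Nat.gcd_eq_zero_iff]
    tauto
  rw [hR, Finset.sum_filter, Finset.sum_filter, ← Nat.sum_div_divisors]
  have hL : ∀ c ∈ Finset.range n, (if c.Coprime n then
      Complex.exp (2 * Real.pi * Complex.I * (a : ℂ) * (c : ℂ) / (n : ℂ)) else 0) =
      ∑ d ∈ n.divisors, ((moebius d : ℤ) : ℂ) * (if d ∣ c then
        Complex.exp (2 * Real.pi * Complex.I * (a : ℂ) * (c : ℂ) / (n : ℂ)) else 0) := by
    intro c _
    have := aux_ind n c hn
    rw [← one_mul (Complex.exp _), ← zero_mul (Complex.exp _), ← ite_mul, this, Finset.sum_mul]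
    refine Finset.sum_congr rfl fun d _ => ?_
    split_ifs <;> simp
  rw [Finset.sum_congr rfl hL, Finset.sum_comm, Int.cast_sum]
  refine Finset.sum_congr rfl fun d hd => ?_
  obtain ⟨m, rfl⟩ := (Nat.mem_divisors.1 hd).1
  have hd0 : d ≠ 0 := fun h => hn (by simp [h])
  have hm0 : m ≠ 0 := fun h => hn (by simp [h])
  have e1 : d * m / d = m := Nat.mul_div_cancel_left m (Nat.pos_of_ne_zero hd0)
  have e2 : d * m / m = d := Nat.mul_div_cancel d (Nat.pos_of_ne_zero hm0)
  rw [← Finset.mul_sum, ← Finset.sum_filter, aux_mult d m hd0, e1, e2]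
  have : ∀ k ∈ Finset.range m,
      Complex.exp (2 * Real.pi * Complex.I * (a : ℂ) * ((d * k : ℕ) : ℂ) / ((d * m : ℕ) : ℂ)) =
      Complex.exp (2 * Real.pi * Complex.I * (a : ℂ) * (k : ℂ) / (m : ℂ)) := by
    intro k _
    have : (d : ℂ) ≠ 0 := by exact_mod_cast hd0
    have : (m : ℂ) ≠ 0 := by exact_mod_cast hm0
    congr 1
    push_cast
    field_simp
  rw [Finset.sum_congr rfl this, aux_geom m hm0 a]
  split_ifs <;> simp [mul_comm]
end

section
/- Let ι be a finite type, A : Matrix ι ι ℚ, and let b : ℕ → ℤ be a finitely supported function with b(0) = 0 such that, in the field ℚ(X) of rational functions over ℚ, the image of the reversed characteristic polynomial det(1 - X·A) equals the finite product ∏_{k ≥ 1} (1 - X^k)^{b(k)} (integer exponents). Then for every positive integer m, the trace of A^m equals ∑_{k | m} k·b(k), the sum ranging over the positive divisors k of m. -/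
open Polynomial in
theorem derivative_det_aux {ι R : Type*} [Fintype ι] [DecidableEq ι] [CommRing R]
    (N : Matrix ι ι R[X]) :
    derivative N.det = Matrix.trace (N.adjugate * N.map derivative) := by
  have h : ∀ i, (N.adjugate * N.map derivative) i i
      = (N.updateCol i (fun j => derivative (N j i))).det := by
    intro i
    rw [← Matrix.cramer_apply, Matrix.cramer_eq_adjugate_mulVec]
    rfl
  simp only [Matrix.trace, Matrix.diag, h, Matrix.det_apply', derivative_sum]
  rw [Finset.sum_comm]
  refine Finset.sum_congr rfl fun σ _ => ?_
  rw [derivative_mul, derivative_intCast, zero_mul, zero_add, derivative_prod_finset,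
    Finset.mul_sum]
  refine Finset.sum_congr rfl fun i _ => ?_
  congr 1
  rw [← Finset.mul_prod_erase _ _ (Finset.mem_univ i), mul_comm]
  congr 1
  · simp
  · refine Finset.prod_congr rfl fun j hj => ?_
    rw [Matrix.updateCol_ne (Finset.ne_of_mem_erase hj)]

def LD (f L : PowerSeries ℚ) : Prop := f ≠ 0 ∧ PowerSeries.derivative ℚ f = f * L

theorem LD.mul {f g L M} (hf : LD f L) (hg : LD g M) : LD (f * g) (L + M) := by
  refine ⟨mul_ne_zero hf.1 hg.1, ?_⟩
  rw [Derivation.leibniz, hf.2, hg.2, smul_eq_mul, smul_eq_mul]; ring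

theorem LD.one : LD 1 0 := ⟨one_ne_zero, by simp⟩

theorem LD.pow {f L} (hf : LD f L) (n : ℕ) : LD (f ^ n) (n • L) := by
  induction n with
  | zero => simpa using LD.one
  | succ n ih => rw [pow_succ, succ_nsmul]; exact ih.mul hf

theorem LD.prod {s : Finset ℕ} {f L : ℕ → PowerSeries ℚ} (h : ∀ k ∈ s, LD (f k) (L k)) :
    LD (∏ k ∈ s, f k) (∑ k ∈ s, L k) := by
  induction s using Finset.induction_on with
  | empty => simpa using LD.one
  | insert a s ha ih =>
    rw [Finset.prod_insert ha, Finset.sum_insert ha]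
    exact (h a (by simp)).mul (ih fun k hk => h k (by simp [hk]))

theorem LD.uniq {f L M} (h : LD f L) (h' : LD f M) : L = M :=
  mul_left_cancel₀ h.1 (h.2.symm.trans h'.2)

theorem LD.cyc (k : ℕ) (hk : 0 < k) : LD (1 - PowerSeries.X ^ k)
    (- PowerSeries.mk fun n => if k ∣ n + 1 then (k : ℚ) else 0) := by
  constructor
  · intro h
    have := congrArg PowerSeries.constantCoeff h
    simp [hk.ne'] at this
  · ext n
    rw [map_sub, mul_neg, sub_mul, one_mul]
    simp only [PowerSeries.coeff_derivative, map_sub, map_neg, PowerSeries.coeff_mk,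
      PowerSeries.coeff_X_pow_mul', PowerSeries.coeff_X_pow, PowerSeries.coeff_one]
    by_cases h1 : k ≤ n
    · have h2 : n + 1 ≠ k := by omega
      have h3 : k ∣ n - k + 1 ↔ k ∣ n + 1 := by
        rw [show n + 1 = (n - k + 1) + k by omega]; simp
      simp [h1, h2, h3]
    · by_cases h2 : n + 1 = k
      · subst h2; simp
      · have h3 : ¬ k ∣ n + 1 := fun h => by have := Nat.le_of_dvd (by omega) h; omega
        simp [h1, h2, h3]

open Polynomial in
theorem LD.charpolyRev {ι : Type*} [Fintype ι] [DecidableEq ι] (A : Matrix ι ι ℚ) :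
    LD (A.charpolyRev : PowerSeries ℚ) (- PowerSeries.mk fun n => Matrix.trace (A ^ (n + 1))) := by
  constructor
  · intro h
    have h1 : A.charpolyRev = 0 := by exact_mod_cast h
    have := Matrix.eval_charpolyRev (M := A)
    simp [h1] at this
  · let φ : ℚ[X] →+* PowerSeries ℚ := Polynomial.coeToPowerSeries.ringHom
    let N : Matrix ι ι ℚ[X] := 1 - (X : ℚ[X]) • A.map C
    let N' : Matrix ι ι (PowerSeries ℚ) := φ.mapMatrix N
    let M : Matrix ι ι (PowerSeries ℚ) := Matrix.of fun i j => PowerSeries.mk fun n => (A ^ n) i j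
    have hAM : ∀ i j n, PowerSeries.coeff n ((A.map PowerSeries.C * M) i j) = (A ^ (n+1)) i j := by
      intro i j n
      rw [pow_succ']
      simp [Matrix.mul_apply, M]
    have hN' : N' = 1 - (PowerSeries.X : PowerSeries ℚ) • A.map PowerSeries.C := by
      ext1 i j
      by_cases hij : i = j <;>
      (simp [N', N, φ, hij]; exact mul_comm _ _)
    have hNM : N' * M = 1 := by
      rw [hN', sub_mul, one_mul, Matrix.smul_mul]
      ext i j n
      cases n with
      | zero => by_cases hij : i = j <;> simp [M, hij, Matrix.one_apply]
      | succ n =>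
        rw [Matrix.sub_apply, Matrix.smul_apply, map_sub, smul_eq_mul,
          PowerSeries.coeff_succ_X_mul, hAM]
        by_cases hij : i = j <;> simp [M, hij, Matrix.one_apply, PowerSeries.coeff_one]
    have hd : N.map derivative = - A.map C := by
      ext1 i j
      by_cases hij : i = j <;> simp [N, hij]
    have hadj : N'.adjugate = N'.det • M := by
      calc N'.adjugate = N'.adjugate * (N' * M) := by rw [hNM, mul_one]
        _ = _ := by rw [← mul_assoc, Matrix.adjugate_mul, Matrix.smul_mul, one_mul]
    have hdet : φ N.det = N'.det := φ.map_det N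
    rw [PowerSeries.derivative_coe]
    change φ (derivative N.det) = φ N.det * _
    rw [derivative_det_aux, hd, hdet]
    have : φ (N.adjugate * -A.map C).trace = (φ.mapMatrix (N.adjugate * -A.map C)).trace := by
      simp [Matrix.trace]
    rw [this, map_mul, RingHom.map_adjugate]
    change (N'.adjugate * _).trace = _
    have h5 : φ.mapMatrix (-A.map C) = - A.map PowerSeries.C := by
      ext1 i j; simp [φ]
    rw [h5, hadj, Matrix.smul_mul, Matrix.trace_smul, smul_eq_mul]
    congr 1
    rw [mul_neg, Matrix.trace_neg, Matrix.trace_mul_comm]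
    congr 1
    ext n
    simp only [Matrix.trace, Matrix.diag, map_sum, hAM, PowerSeries.coeff_mk]

/-- Let `A` be a square matrix over `ℚ` whose reversed characteristic
polynomial `det(1 - X·A)`, viewed in the field `ℚ(X)` of rational functions, factors as
`∏_{k ≥ 1} (1 - X^k)^{b k}` for a finitely supported `b : ℕ → ℤ` with `b 0 = 0`
(the cycle shape of `A`).  Then for every positive integer `m`, the trace of `A^m`
equals `∑_{k ∣ m} k·b(k)`. -/
theorem fake_monster.stmt10 {ι : Type*} [Fintype ι] [DecidableEq ι]
    (A : Matrix ι ι ℚ) (b : ℕ →₀ ℤ) (hb0 : b 0 = 0)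
    (hshape : algebraMap (Polynomial ℚ) (RatFunc ℚ) A.charpolyRev =
      ∏ k ∈ b.support, ((1 : RatFunc ℚ) - RatFunc.X ^ k) ^ (b k)) :
    ∀ m : ℕ, 0 < m →
      Matrix.trace (A ^ m) = ∑ k ∈ m.divisors, (k : ℚ) * ((b k : ℤ) : ℚ) := by
  have hpos : ∀ k ∈ b.support, 0 < k := by
    intro k hk
    rcases Nat.eq_zero_or_pos k with rfl | h
    · simp [hb0] at hk
    · exact h
  have key : A.charpolyRev * ∏ k ∈ b.support, (1 - Polynomial.X ^ k : Polynomial ℚ) ^ (-b k).toNat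
      = ∏ k ∈ b.support, (1 - Polynomial.X ^ k : Polynomial ℚ) ^ (b k).toNat := by
    apply RatFunc.algebraMap_injective ℚ
    rw [map_mul, hshape, map_prod, map_prod, ← Finset.prod_mul_distrib]
    refine Finset.prod_congr rfl fun k hk => ?_
    have hne : (1 - RatFunc.X ^ k : RatFunc ℚ) ≠ 0 := by
      have h1 : (1 - Polynomial.X ^ k : Polynomial ℚ) ≠ 0 := by
        intro h
        have := congrArg (Polynomial.eval 0) h
        simp [(hpos k hk).ne'] at this
      have := (map_ne_zero_iff _ (RatFunc.algebraMap_injective ℚ)).2 h1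
      simpa using this
    simp only [map_pow, map_sub, map_one, RatFunc.algebraMap_X]
    rw [← zpow_natCast _ (b k).toNat, ← zpow_natCast _ (-b k).toNat, ← zpow_add₀ hne]
    congr 1
    omega
  have key2 := congrArg (Polynomial.coeToPowerSeries.ringHom (R := ℚ)) key
  simp only [map_mul, map_prod, map_pow, map_sub, map_one,
    Polynomial.coeToPowerSeries.ringHom_apply, Polynomial.coe_X] at key2
  have hP : ∀ e : ℕ → ℕ, LD (∏ k ∈ b.support, (1 - PowerSeries.X ^ k) ^ e k) _ := fun e =>
    LD.prod fun k hk => (LD.cyc k (hpos k hk)).pow (e k)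
  have h1 := (LD.charpolyRev A).mul (hP fun k => (-b k).toNat)
  rw [key2] at h1
  have h2 := h1.uniq (hP fun k => (b k).toNat)
  intro m hm
  obtain ⟨n, rfl⟩ : ∃ n, m = n + 1 := ⟨m - 1, by omega⟩
  have h3 := congrArg (PowerSeries.coeff n) h2
  simp only [map_add, map_neg, map_sum, map_nsmul, PowerSeries.coeff_mk, smul_neg,
    Finset.sum_neg_distrib] at h3
  simp only [nsmul_eq_mul] at h3
  have h4 : Matrix.trace (A ^ (n + 1)) =
      ∑ k ∈ b.support, (b k : ℚ) * (if k ∣ n + 1 then (k : ℚ) else 0) := by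
    have : ∀ k, (b k : ℚ) = ((b k).toNat : ℚ) - ((-b k).toNat : ℚ) := by
      intro k
      have : b k = ((b k).toNat : ℤ) - ((-b k).toNat : ℤ) := by omega
      exact_mod_cast congrArg (Int.cast (R := ℚ)) this
    simp only [this, sub_mul, Finset.sum_sub_distrib]
    linarith
  rw [h4]
  have h5 : ∀ k, (b k : ℚ) * (if k ∣ n + 1 then (k : ℚ) else 0)
      = if k ∣ n + 1 then (k : ℚ) * (b k : ℚ) else 0 := by
    intro k; split_ifs <;> ring
  simp only [h5]
  rw [← Finset.sum_filter]
  refine Finset.sum_subset ?_ ?_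
  · intro k hk
    simp at hk
    simp [hk.2]
  · intro k hk hk'
    simp at hk hk'
    by_cases h : b k = 0
    · simp [h]
    · exact absurd hk (hk' h)
end

section
/- Let ι be a finite type, A : Matrix ι ι ℚ, and let b : ℕ → ℤ be a finitely supported function with b(0) = 0 such that, in the field ℚ(X) of rational functions over ℚ, the image of det(1 - X·A) equals ∏_{k ≥ 1} (1 - X^k)^{b(k)}. Then for every positive integer m, the image of det(1 - X·A^m) in ℚ(X) equals ∏_{k ≥ 1} (1 - X^(k/gcd(k,m)))^(gcd(k,m)·b(k)). -/
/-- `∏_{j<m} (1 - ζ^j Y) = 1 - Y^m`. -/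
lemma fm_prod_one {R : Type*} [CommRing R] [IsDomain R] {ζ : R} {m : ℕ} (hm : 0 < m)
    (h : IsPrimitiveRoot ζ m) (Y : R) :
    ∏ j ∈ Finset.range m, (1 - ζ ^ j * Y) = 1 - Y ^ m := by
  have h1 := h.pow_sub_pow_eq_prod_sub_mul 1 Y hm
  rw [one_pow] at h1
  rw [h1]
  have : NeZero m := ⟨hm.ne'⟩
  refine Finset.prod_bij (fun j _ => ζ ^ j) ?_ ?_ ?_ ?_
  · intro j _
    rw [Polynomial.mem_nthRootsFinset hm, ← pow_mul, mul_comm, pow_mul, h.pow_eq_one, one_pow]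
  · intro i hi j hj hij
    exact h.pow_inj (Finset.mem_range.1 hi) (Finset.mem_range.1 hj) hij
  · intro μ hμ
    rw [Polynomial.mem_nthRootsFinset hm] at hμ
    obtain ⟨i, hi, rfl⟩ := h.eq_pow_of_pow_eq_one hμ
    exact ⟨i, Finset.mem_range.2 hi, rfl⟩
  · intro _ _
    rfl

lemma fm_prod_mul {R : Type*} [CommRing R] [IsDomain R] {ζ : R} {m : ℕ} (hm : 0 < m)
    (h : IsPrimitiveRoot ζ m) (Y : R) (g : ℕ) :
    ∏ j ∈ Finset.range (m * g), (1 - ζ ^ j * Y) = (1 - Y ^ m) ^ g := by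
  induction g with
  | zero => simp
  | succ g ih =>
    rw [Nat.mul_succ, Finset.prod_range_add, ih, pow_succ, ← fm_prod_one hm h Y]
    congr 1
    refine Finset.prod_congr rfl fun j _ => ?_
    rw [pow_add, pow_mul, h.pow_eq_one, one_pow, one_mul]

section FM

open Polynomial

/-- The multiplicative operator `p ↦ ∏_{j<m} p(ζ^j X)`. -/
noncomputable def fmT (ζ : ℂ) (m : ℕ) : ℚ[X] →* ℂ[X] where
  toFun p := ∏ j ∈ Finset.range m, ((p.map (algebraMap ℚ ℂ)).comp (C (ζ ^ j) * X))
  map_one' := by simp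
  map_mul' p q := by simp [Finset.prod_mul_distrib]

/-- `p ↦ p(X^m)`, over `ℂ`. -/
noncomputable def fmE (m : ℕ) : ℚ[X] →+* ℂ[X] :=
  ((expand ℂ m : ℂ[X] →ₐ[ℂ] ℂ[X]) : ℂ[X] →+* ℂ[X]).comp (mapRingHom (algebraMap ℚ ℂ))

lemma fmE_inj {m : ℕ} (hm : 0 < m) : Function.Injective (fmE m) := by
  intro p q h
  exact map_injective _ (algebraMap ℚ ℂ).injective (expand_injective hm h)

lemma fmT_one_sub {ζ : ℂ} {m : ℕ} (hm : 0 < m) (h : IsPrimitiveRoot ζ m) (k : ℕ) :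
    fmT ζ m (1 - X ^ k) = fmE m ((1 - X ^ (k / Nat.gcd k m)) ^ (Nat.gcd k m)) := by
  have hg : 0 < Nat.gcd k m := Nat.gcd_pos_of_pos_right _ hm
  obtain ⟨m', hm'⟩ := Nat.gcd_dvd_right k m
  obtain ⟨k', hk'⟩ := Nat.gcd_dvd_left k m
  set g := Nat.gcd k m with hgdef
  have hm'0 : 0 < m' := Nat.pos_of_ne_zero (by rintro rfl; simp at hm'; omega)
  have hkg : k / g = k' := by rw [hk']; exact Nat.mul_div_cancel_left _ hg
  have hcop : Nat.Coprime k' m' := by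
    have := Nat.coprime_div_gcd_div_gcd (m := k) (n := m) hg
    rw [← hgdef, hkg] at this
    rwa [hm', Nat.mul_div_cancel_left _ hg] at this
  have hprim : IsPrimitiveRoot (ζ ^ k) m' := by
    have h1 : IsPrimitiveRoot (ζ ^ g) m' := h.pow hm hm'
    have := h1.pow_of_coprime k' hcop
    rwa [← pow_mul, ← hk'] at this
  have hprimC : IsPrimitiveRoot (C (ζ ^ k) : ℂ[X]) m' := hprim.map_of_injective C_injective
  have key := fm_prod_mul hm'0 hprimC (X ^ k) g
  rw [mul_comm m' g, ← hm'] at key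
  have hL : fmT ζ m (1 - X ^ k) =
      ∏ j ∈ Finset.range m, (1 - (C (ζ ^ k)) ^ j * (X : ℂ[X]) ^ k) := by
    change ∏ j ∈ Finset.range m, _ = _
    refine Finset.prod_congr rfl fun j _ => ?_
    simp [mul_pow, ← pow_mul, mul_comm]
  rw [hL, key, hkg]
  simp only [fmE, RingHom.comp_apply, map_pow, map_sub, map_one, coe_mapRingHom, map_X,
    RingHom.coe_coe, expand_X]
  rw [← pow_mul, ← pow_mul]
  congr 3
  rw [hk', hm']
  ring

lemma fmT_charpolyRev {ι : Type*} [Fintype ι] [DecidableEq ι] (A : Matrix ι ι ℚ)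
    {ζ : ℂ} {m : ℕ} (hm : 0 < m) (h : IsPrimitiveRoot ζ m) :
    fmT ζ m A.charpolyRev = fmE m (A ^ m).charpolyRev := by
  set B : Matrix ι ι ℂ[X] := (X : ℂ[X]) • A.map (fun a => C (algebraMap ℚ ℂ a)) with hB
  have hj : ∀ c : ℂ, (A.charpolyRev.map (algebraMap ℚ ℂ)).comp (C c * X) =
      (1 - C c • B).det := by
    intro c
    have : ∀ p : ℚ[X], (p.map (algebraMap ℚ ℂ)).comp (C c * X) =
        ((compRingHom (C c * X)).comp (mapRingHom (algebraMap ℚ ℂ))) p := fun p => rfl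
    rw [this, Matrix.charpolyRev, RingHom.map_det]
    congr 1
    ext1 i j
    by_cases hij : i = j
    · subst hij
      simp [hB]
      ring
    · simp [hB, Matrix.one_apply_ne hij]
      ring
  have hE : fmE m (A ^ m).charpolyRev = (1 - B ^ m).det := by
    rw [Matrix.charpolyRev, RingHom.map_det]
    congr 1
    have hBm : B ^ m = (X ^ m : ℂ[X]) • (A ^ m).map (fun a => C (algebraMap ℚ ℂ a)) := by
      rw [hB, _root_.smul_pow]
      congr 1
      exact (map_pow ((C.comp (algebraMap ℚ ℂ)).mapMatrix) A m).symm
    rw [hBm]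
    ext1 i j
    by_cases hij : i = j
    · subst hij
      simp [fmE]
    · simp [fmE, Matrix.one_apply_ne hij]
  rw [hE]
  have hpoly := fm_prod_one hm (h.map_of_injective (f := (C : ℂ →+* ℂ[X])) C_injective) X
  have h2 := congrArg (fun p => (aeval B p).det) hpoly
  have h3 := map_prod (Matrix.detMonoidHom.comp ((aeval B : ℂ[X] →ₐ[ℂ] _) : ℂ[X] →* Matrix ι ι ℂ[X]))
    (fun j => (1 - (C ζ) ^ j * X : ℂ[X])) (Finset.range m)
  simp only [map_sub, map_one, map_pow, aeval_X] at h2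
  rw [← h2]
  refine Eq.trans ?_ h3.symm
  change ∏ j ∈ Finset.range m, _ = _
  refine Finset.prod_congr rfl fun j _ => ?_
  rw [hj]
  change _ = (aeval B (1 - (C ζ) ^ j * X : ℂ[X])).det
  congr 1
  rw [← C_pow, ← smul_eq_C_mul, map_sub, map_one, map_smul, aeval_X]
  congr 1
  ext1 i j
  simp [smul_eq_C_mul]

lemma fm_ne (k : ℕ) (hk : k ≠ 0) : (1 - X ^ k : ℚ[X]) ≠ 0 := by
  intro h
  have := congrArg (eval 0) h
  simp [hk] at this

lemma fm_clear (s : Finset ℕ) (b : ℕ → ℤ) (e : ℕ → ℕ) (f : ℕ → ℕ)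
    (he : ∀ k ∈ s, e k ≠ 0) (P : ℚ[X]) :
    algebraMap ℚ[X] (RatFunc ℚ) P =
      ∏ k ∈ s, ((1 : RatFunc ℚ) - RatFunc.X ^ (e k)) ^ ((f k : ℤ) * b k) ↔
    P * ∏ k ∈ s, ((1 - X ^ (e k)) ^ f k) ^ (-b k).toNat =
      ∏ k ∈ s, ((1 - X ^ (e k)) ^ f k) ^ (b k).toNat := by
  rw [← (RatFunc.algebraMap_injective ℚ).eq_iff]
  simp only [map_mul, map_prod, map_pow, map_sub, map_one, RatFunc.algebraMap_X]
  have hne : ∀ k ∈ s, (1 - RatFunc.X ^ e k : RatFunc ℚ) ≠ 0 := by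
    intro k hk h0
    apply fm_ne (e k) (he k hk)
    apply RatFunc.algebraMap_injective ℚ
    simpa using h0
  rw [← eq_div_iff (Finset.prod_ne_zero_iff.2 fun k hk => pow_ne_zero _ (pow_ne_zero _ (hne k hk))),
    ← Finset.prod_div_distrib]
  have : ∀ k ∈ s, ((1 : RatFunc ℚ) - RatFunc.X ^ (e k)) ^ ((f k : ℤ) * b k) =
      ((1 - RatFunc.X ^ (e k)) ^ f k) ^ (b k).toNat /
      ((1 - RatFunc.X ^ (e k)) ^ f k) ^ (-b k).toNat := by
    intro k hk
    have h1 : b k = ((b k).toNat : ℤ) - ((-b k).toNat : ℤ) := by omega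
    conv_lhs => rw [h1]
    rw [zpow_mul, zpow_sub₀ (zpow_ne_zero _ (hne k hk))]
    simp only [zpow_natCast]
  rw [Finset.prod_congr rfl this]

end FM

/-- Let `A` be a square matrix over `ℚ` with cycle shape `b`, i.e. the
image in `ℚ(X)` of `det(1 - X·A)` equals `∏_{k ≥ 1} (1 - X^k)^{b k}` for a finitely
supported `b : ℕ → ℤ` with `b 0 = 0`.  Then for every positive integer `m`, the image in
`ℚ(X)` of `det(1 - X·A^m)` equals `∏_{k ≥ 1} (1 - X^(k/gcd(k,m)))^(gcd(k,m)·b(k))`. -/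
theorem fake_monster.stmt12 {ι : Type*} [Fintype ι] [DecidableEq ι]
    (A : Matrix ι ι ℚ) (b : ℕ →₀ ℤ) (hb0 : b 0 = 0)
    (hshape : algebraMap (Polynomial ℚ) (RatFunc ℚ) A.charpolyRev =
      ∏ k ∈ b.support, ((1 : RatFunc ℚ) - RatFunc.X ^ k) ^ (b k)) :
    ∀ m : ℕ, 0 < m →
      algebraMap (Polynomial ℚ) (RatFunc ℚ) (A ^ m).charpolyRev =
        ∏ k ∈ b.support,
          ((1 : RatFunc ℚ) - RatFunc.X ^ (k / Nat.gcd k m)) ^ ((Nat.gcd k m : ℤ) * b k) := by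
  intro m hm
  have hk0 : ∀ k ∈ b.support, k ≠ 0 := by
    rintro k hk rfl
    exact Finsupp.mem_support_iff.1 hk hb0
  have h1 := (fm_clear b.support b (fun k => k) (fun _ => 1) hk0 A.charpolyRev).1
    (by simpa using hshape)
  refine (fm_clear b.support b (fun k => k / Nat.gcd k m) (fun k => Nat.gcd k m) ?_ _).2 ?_
  · intro k hk
    exact (Nat.div_pos (Nat.gcd_le_left m (Nat.pos_of_ne_zero (hk0 k hk)))
      (Nat.gcd_pos_of_pos_right _ hm)).ne'
  obtain ⟨ζ, hζ⟩ : ∃ ζ : ℂ, IsPrimitiveRoot ζ m := ⟨_, Complex.isPrimitiveRoot_exp m hm.ne'⟩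
  have h2 := congrArg (fmT ζ m) h1
  simp only [pow_one, map_mul, map_prod, fmT_charpolyRev A hm hζ] at h2
  simp only [map_pow (fmT ζ m), fmT_one_sub hm hζ] at h2
  apply fmE_inj hm
  rw [map_mul, map_prod, map_prod]
  simp only [map_pow (fmE m) (_ ^ _)]
  exact h2
end

section
/- Let ι be a finite type and A : Matrix ι ι ℚ a matrix of finite multiplicative order (A^r = 1 for some positive integer r). Let b : ℕ → ℤ be a finitely supported function with b(0) = 0 such that, in the field ℚ(X) of rational functions over ℚ, the image of det(1 - X·A) equals ∏_{k ≥ 1} (1 - X^k)^{b(k)}. Then the multiplicative order of A equals the least common multiple of the set {k ≥ 1 : b(k) ≠ 0} (with the convention that the lcm of the empty set is 1). -/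
open Polynomial in
theorem fm_key (P : ℚ[X]) (b : ℕ →₀ ℤ) (hb0 : b 0 = 0)
    (h : algebraMap (Polynomial ℚ) (RatFunc ℚ) P =
      ∏ k ∈ b.support, ((1 : RatFunc ℚ) - RatFunc.X ^ k) ^ (b k)) :
    P * ∏ k ∈ b.support, (1 - X ^ k) ^ (-b k).toNat =
      ∏ k ∈ b.support, (1 - X ^ k) ^ (b k).toNat := by
  apply RatFunc.algebraMap_injective ℚ
  rw [map_mul, h, map_prod, map_prod, ← Finset.prod_mul_distrib]
  apply Finset.prod_congr rfl
  intro k hk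
  have hk0 : k ≠ 0 := by
    rintro rfl
    simp [hb0] at hk
  have hne : (1 : RatFunc ℚ) - RatFunc.X ^ k ≠ 0 := by
    have h1 : (1 - X ^ k : ℚ[X]) ≠ 0 := by
      intro h0
      have := congrArg (Polynomial.eval 0) h0
      simp [hk0] at this
    have := (map_ne_zero_iff _ (RatFunc.algebraMap_injective ℚ)).2 h1
    simpa using this
  simp only [map_pow, map_sub, map_one, RatFunc.algebraMap_X]
  rw [← zpow_natCast (_ - _), ← zpow_natCast (_ - _), ← zpow_add₀ hne]
  congr 1
  omega

open Polynomial in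
theorem fm_eval (P : ℚ[X]) (b : ℕ →₀ ℤ)
    (h : P * ∏ k ∈ b.support, (1 - X ^ k) ^ (-b k).toNat =
      ∏ k ∈ b.support, (1 - X ^ k) ^ (b k).toNat) (z : ℂ) :
    aeval z P * ∏ k ∈ b.support, (1 - z ^ k) ^ (-b k).toNat =
      ∏ k ∈ b.support, (1 - z ^ k) ^ (b k).toNat := by
  simpa [map_prod] using congrArg (aeval z) h

open Polynomial in
theorem fm_det {ι : Type*} [Fintype ι] [DecidableEq ι] (A : Matrix ι ι ℚ) (z : ℂ) :
    aeval z A.charpolyRev = (1 - z • A.map (algebraMap ℚ ℂ)).det := by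
  rw [Matrix.charpolyRev, AlgHom.map_det]
  congr 1
  ext i j
  by_cases hij : i = j <;> simp [hij] <;> exact mul_comm _ _

theorem fm_root {ι : Type*} [Fintype ι] [DecidableEq ι] (A : Matrix ι ι ℚ) (z : ℂ) (n : ℕ)
    (hn : A ^ n = 1) (h : Polynomial.aeval z A.charpolyRev = 0) : z ^ n = 1 := by
  rw [fm_det] at h
  set B := A.map (algebraMap ℚ ℂ) with hB
  have hBn : B ^ n = 1 := by
    have := congrArg (fun M => (algebraMap ℚ ℂ).mapMatrix M) hn
    simp only [map_pow, map_one] at this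
    exact this
  have h1 := congrArg Matrix.det (mul_neg_geom_sum (z • B) n)
  rw [Matrix.det_mul, h, zero_mul, smul_pow, hBn] at h1
  have h2 : (1 : Matrix ι ι ℂ) - z ^ n • 1 = (1 - z ^ n) • 1 := by rw [sub_smul, one_smul]
  rw [h2, Matrix.det_smul, Matrix.det_one, mul_one] at h1
  have := eq_zero_of_pow_eq_zero h1.symm
  exact (sub_eq_zero.1 this).symm

open Polynomial in
theorem fm_pow {ι : Type*} [Fintype ι] [DecidableEq ι] (A : Matrix ι ι ℚ) (r L : ℕ) (hr : 0 < r)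
    (hA : A ^ r = 1) (hL : 0 < L)
    (h : ∀ z : ℂ, aeval z A.charpolyRev = 0 → z ^ L = 1) : A ^ L = 1 := by
  have hd : minpoly ℚ A ∣ X ^ r - 1 := minpoly.dvd _ _ (by simp [hA])
  have hsep : (X ^ r - 1 : ℚ[X]).Separable := by
    have := separable_X_pow_sub_C (1 : ℚ) (n := r) (by exact_mod_cast hr.ne') one_ne_zero
    simpa using this
  have hsep2 := (hsep.of_dvd hd).map (f := algebraMap ℚ ℂ)
  suffices hm : minpoly ℚ A ∣ X ^ L - 1 by
    obtain ⟨q, hq⟩ := hm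
    have := congrArg (aeval A) hq
    simp only [map_sub, map_mul, minpoly.aeval, zero_mul, map_pow, aeval_X, map_one] at this
    exact sub_eq_zero.1 this
  rw [← Polynomial.map_dvd_map' (algebraMap ℚ ℂ)]
  have hne : (X ^ L - 1 : ℂ[X]) ≠ 0 := by
    simpa using X_pow_sub_C_ne_zero hL (1 : ℂ)
  refine (IsAlgClosed.splits _).dvd_of_roots_le_roots hsep2.ne_zero ?_
  rw [Multiset.le_iff_subset (nodup_roots hsep2)]
  intro z hz
  have hz1 := (mem_roots'.1 hz).2
  simp only [Polynomial.map_sub, Polynomial.map_pow, map_X, Polynomial.map_one]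
  rw [mem_roots hne]
  obtain ⟨q, hq⟩ := Matrix.minpoly_dvd_charpoly A
  have hz2 : eval₂ (algebraMap ℚ ℂ) z A.charpoly = 0 := by
    rw [hq, eval₂_mul, ← eval_map, hz1.eq_zero, zero_mul]
  have hzz : z ≠ 0 := by
    rintro rfl
    obtain ⟨q, hq⟩ := hd
    have := congrArg (eval₂ (algebraMap ℚ ℂ) 0) hq
    rw [eval₂_mul, eval₂_eq_eval_map _ (p := minpoly ℚ A), hz1.eq_zero] at this
    simp [hr.ne'] at this
  have h3 := h z⁻¹ (by
    rw [← Matrix.reverse_charpoly, aeval_def]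
    let _ : Invertible z := invertibleOfNonzero hzz
    rw [← invOf_eq_inv]
    exact (eval₂_reverse_eq_zero_iff (algebraMap ℚ ℂ) z A.charpoly).2 hz2)
  rw [inv_pow, inv_eq_one] at h3
  simp [h3]

/-- Let `A` be a square matrix over `ℚ` of finite multiplicative order,
with cycle shape `b` (i.e. the image in `ℚ(X)` of `det(1 - X·A)` equals
`∏_{k ≥ 1} (1 - X^k)^{b k}` for a finitely supported `b : ℕ → ℤ` with `b 0 = 0`).
Then the multiplicative order of `A` equals the least common multiple of
`{k ≥ 1 : b k ≠ 0}` (the lcm of the empty set being `1`). -/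
theorem fake_monster.stmt13 {ι : Type*} [Fintype ι] [DecidableEq ι]
    (A : Matrix ι ι ℚ) (hfin : ∃ r : ℕ, 0 < r ∧ A ^ r = 1)
    (b : ℕ →₀ ℤ) (hb0 : b 0 = 0)
    (hshape : algebraMap (Polynomial ℚ) (RatFunc ℚ) A.charpolyRev =
      ∏ k ∈ b.support, ((1 : RatFunc ℚ) - RatFunc.X ^ k) ^ (b k)) :
    orderOf A = b.support.lcm id := by
  have key := fm_eval _ b (fm_key _ b hb0 hshape)
  obtain ⟨r, hr, hA⟩ := hfin
  have hL : 0 < b.support.lcm id := by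
    rw [Nat.pos_iff_ne_zero, Ne, Finset.lcm_eq_zero_iff]
    simp [hb0]
  apply Nat.dvd_antisymm
  · apply orderOf_dvd_of_pow_eq_one
    refine fm_pow A r _ hr hA hL fun z hz => ?_
    have h := key z
    rw [hz, zero_mul, eq_comm, Finset.prod_eq_zero_iff] at h
    obtain ⟨k, hk, h⟩ := h
    obtain ⟨q, hq⟩ := Finset.dvd_lcm (f := id) hk
    rw [hq, id, pow_mul, ← sub_eq_zero.1 (eq_zero_of_pow_eq_zero h), one_pow]
  · by_contra hcon
    rw [Finset.lcm_dvd_iff] at hcon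
    push Not at hcon
    obtain ⟨k0, hk0, hk0n⟩ := hcon
    obtain ⟨k, hk, hmax⟩ := Finset.exists_max_image
      (b.support.filter fun k => ¬ k ∣ orderOf A) id ⟨k0, by simp_all⟩
    rw [Finset.mem_filter] at hk
    obtain ⟨hk, hkn⟩ := hk
    have hkz : k ≠ 0 := by
      rintro rfl
      simp [hb0] at hk
    have hz := Complex.isPrimitiveRoot_exp k hkz
    set z := Complex.exp (2 * Real.pi * Complex.I / k)
    have hzne : ∀ m ∈ b.support, m ≠ k → 1 - z ^ m ≠ 0 := by
      intro m hm hmk h0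
      have hd := (hz.pow_eq_one_iff_dvd m).1 (sub_eq_zero.1 h0).symm
      have hm0 : m ≠ 0 := by
        rintro rfl
        simp [hb0] at hm
      have h1 := hmax m (Finset.mem_filter.2 ⟨hm, fun h => hkn (hd.trans h)⟩)
      exact hmk (le_antisymm h1 (Nat.le_of_dvd (Nat.pos_of_ne_zero hm0) hd))
    have hbk : b k ≠ 0 := by simpa using hk
    have h := key z
    have hzk : 1 - z ^ k = 0 := by rw [hz.pow_eq_one, sub_self]
    rcases lt_or_gt_of_ne hbk with hneg | hpos
    · rw [Finset.prod_eq_zero (i := k) hk (by rw [hzk]; exact zero_pow (by omega)), mul_zero,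
        eq_comm, Finset.prod_eq_zero_iff] at h
      obtain ⟨m, hm, h⟩ := h
      by_cases hmk : m = k
      · subst hmk
        rw [show (b m).toNat = 0 by omega, pow_zero] at h
        exact one_ne_zero h
      · exact hzne m hm hmk (eq_zero_of_pow_eq_zero h)
    · rw [Finset.prod_eq_zero (s := b.support) (f := fun k => (1 - z ^ k) ^ (b k).toNat)
        (i := k) hk (by rw [hzk]; exact zero_pow (by omega)), mul_eq_zero] at h
      rcases h with h | h
      · exact hkn ((hz.pow_eq_one_iff_dvd _).1 (fm_root A z _ (pow_orderOf_eq_one A) h))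
      · rw [Finset.prod_eq_zero_iff] at h
        obtain ⟨m, hm, h⟩ := h
        by_cases hmk : m = k
        · subst hmk
          rw [show (-b m).toNat = 0 by omega, pow_zero] at h
          exact one_ne_zero h
        · exact hzne m hm hmk (eq_zero_of_pow_eq_zero h)
end

section
/- Let ι be a finite type and A : Matrix ι ι ℚ a matrix of finite multiplicative order (A^r = 1 for some positive integer r). Let b : ℕ → ℤ be a finitely supported function with b(0) = 0 such that, in the field ℚ(X) of rational functions over ℚ, the image of det(1 - X·A) equals ∏_{k ≥ 1} (1 - X^k)^{b(k)}. Then the dimension over ℚ of the fixed subspace {v : A·v = v} equals ∑_{k ≥ 1} b(k). -/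
open Polynomial in
/-- `x` has order `n` at the point `1`. -/
def ordOne (x : RatFunc ℚ) (n : ℤ) : Prop :=
  ∃ p q : ℚ[X], p ≠ 0 ∧ q ≠ 0 ∧ algebraMap ℚ[X] (RatFunc ℚ) q * x = algebraMap ℚ[X] (RatFunc ℚ) p ∧
    (p.rootMultiplicity 1 : ℤ) = q.rootMultiplicity 1 + n

open Polynomial in
lemma ordOne_mul {x y : RatFunc ℚ} {m n : ℤ} (hx : ordOne x m) (hy : ordOne y n) :
    ordOne (x * y) (m + n) := by
  obtain ⟨p, q, hp, hq, h, e⟩ := hx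
  obtain ⟨p', q', hp', hq', h', e'⟩ := hy
  refine ⟨p * p', q * q', mul_ne_zero hp hp', mul_ne_zero hq hq', ?_, ?_⟩
  · rw [map_mul, map_mul, ← h, ← h']; ring
  · rw [rootMultiplicity_mul (mul_ne_zero hp hp'), rootMultiplicity_mul (mul_ne_zero hq hq')]
    push_cast; linarith

open Polynomial in
lemma ordOne_one : ordOne 1 0 := ⟨1, 1, one_ne_zero, one_ne_zero, by simp, by simp⟩

open Polynomial in
lemma ordOne_inv {x : RatFunc ℚ} {m : ℤ} (hx : ordOne x m) : ordOne x⁻¹ (-m) := by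
  obtain ⟨p, q, hp, hq, h, e⟩ := hx
  refine ⟨q, p, hq, hp, ?_, by linarith⟩
  have hp0 : algebraMap ℚ[X] (RatFunc ℚ) p ≠ 0 := by
    simpa using hp
  have hx : x ≠ 0 := by
    rintro rfl
    exact hp0 (by rw [← h, mul_zero])
  rw [← h]; field_simp

lemma ordOne_pow {x : RatFunc ℚ} {m : ℤ} (hx : ordOne x m) (n : ℕ) : ordOne (x ^ n) (n * m) := by
  induction n with
  | zero => simpa using ordOne_one
  | succ k ih =>
    have := ordOne_mul ih hx
    rw [pow_succ]
    convert this using 1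
    push_cast; ring

lemma ordOne_zpow {x : RatFunc ℚ} {m : ℤ} (hx : ordOne x m) (n : ℤ) :
    ordOne (x ^ n) (n * m) := by
  obtain ⟨k, rfl | rfl⟩ := n.eq_nat_or_neg
  · simpa using ordOne_pow hx k
  · simpa using ordOne_inv (ordOne_pow hx k)

lemma ordOne_prod (s : Finset ℕ) (f : ℕ → RatFunc ℚ) (g : ℕ → ℤ)
    (h : ∀ k ∈ s, ordOne (f k) (g k)) : ordOne (∏ k ∈ s, f k) (∑ k ∈ s, g k) := by
  induction s using Finset.induction_on with
  | empty => simpa using ordOne_one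
  | insert a s ha ih =>
    rw [Finset.prod_insert ha, Finset.sum_insert ha]
    exact ordOne_mul (h _ (Finset.mem_insert_self _ _))
      (ih fun k hk => h k (Finset.mem_insert_of_mem hk))

open Polynomial in
lemma ordOne_base {k : ℕ} (hk : k ≠ 0) : ordOne ((1 : RatFunc ℚ) - RatFunc.X ^ k) 1 := by
  have hs : (X ^ k - 1 : ℚ[X]).Separable := X_pow_sub_one_separable_iff.2 (by exact_mod_cast hk)
  have h0 : (X ^ k - 1 : ℚ[X]) ≠ 0 := hs.ne_zero
  refine ⟨X ^ k - 1, -1, h0, by simp, by simp, ?_⟩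
  have h1 := rootMultiplicity_le_one_of_separable hs 1
  have h2 : 0 < (X ^ k - 1 : ℚ[X]).rootMultiplicity 1 := by
    rw [rootMultiplicity_pos h0]; simp
  have h3 : (-1 : ℚ[X]).rootMultiplicity 1 = 0 := by
    rw [show (-1 : ℚ[X]) = C (-1) by simp, rootMultiplicity_C]
  rw [h3]; push_cast; omega

open Polynomial in
lemma ordOne_poly {c : ℚ[X]} {n : ℤ} (h : ordOne (algebraMap ℚ[X] (RatFunc ℚ) c) n) :
    (c.rootMultiplicity 1 : ℤ) = n := by
  obtain ⟨p, q, hp, hq, h, e⟩ := h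
  rw [← map_mul] at h
  have h' : q * c = p := IsFractionRing.injective ℚ[X] (RatFunc ℚ) h
  subst h'
  rw [rootMultiplicity_mul hp] at e
  push_cast at e; linarith

open Polynomial in
lemma finrank_fixed_eq {ι : Type*} [Fintype ι] [DecidableEq ι]
    (A : Matrix ι ι ℚ) (r : ℕ) (hr : 0 < r) (hA : A ^ r = 1) :
    Module.finrank ℚ (LinearMap.ker (Matrix.mulVecLin (A - 1))) =
      A.charpolyRev.rootMultiplicity 1 := by
  have hu : IsUnit A := IsUnit.of_pow_eq_one hA hr.ne'
  have hd : IsUnit A.det := (Matrix.isUnit_iff_isUnit_det A).1 hu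
  have hB : A⁻¹ ^ r = 1 := by rw [Matrix.inv_pow', hA, inv_one]
  have hss : Module.End.IsSemisimple (Matrix.toLin' A⁻¹) := by
    apply Module.End.isSemisimple_of_squarefree_aeval_eq_zero (p := X ^ r - 1)
    · exact (X_pow_sub_one_separable_iff.2 (by exact_mod_cast hr.ne')).squarefree
    · simp [← Matrix.toLin'_pow, hB]
      exact sub_self _
  have h1 := LinearMap.finrank_maxGenEigenspace_eq (Matrix.toLin' A⁻¹) 1
  rw [hss.isFinitelySemisimple.maxGenEigenspace_eq_eigenspace, Matrix.charpoly_toLin',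
    Matrix.charpoly_inv _ hu] at h1
  have hker : Module.End.eigenspace (Matrix.toLin' A⁻¹) 1 =
      LinearMap.ker (Matrix.mulVecLin (A - 1)) := by
    ext v
    simp only [Module.End.mem_eigenspace_iff, Matrix.toLin'_apply, one_smul, LinearMap.mem_ker,
      Matrix.mulVecLin_apply, Matrix.sub_mulVec, Matrix.one_mulVec, sub_eq_zero]
    constructor
    · intro h
      nth_rw 1 [← h]
      rw [Matrix.mulVec_mulVec, Matrix.mul_nonsing_inv _ hd, Matrix.one_mulVec]
    · intro h
      nth_rw 1 [← h]
      rw [Matrix.mulVec_mulVec, Matrix.nonsing_inv_mul _ hd, Matrix.one_mulVec]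
  rw [← hker, h1]
  have hne : A.charpolyRev ≠ 0 := by
    intro h
    have := Matrix.eval_charpolyRev (M := A)
    simp [h] at this
  have hc : ((-1) ^ Fintype.card ι * C (Ring.inverse A.det) : ℚ[X]) =
      C ((-1) ^ Fintype.card ι * Ring.inverse A.det) := by simp
  have hc0 : ((-1) ^ Fintype.card ι * Ring.inverse A.det) ≠ 0 := by
    simp [hd.ne_zero]
  rw [hc, rootMultiplicity_mul (mul_ne_zero (C_ne_zero.2 hc0) hne), rootMultiplicity_C, zero_add]

/-- Let `A` be a square matrix over `ℚ` of finite multiplicative order,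
with cycle shape `b` (i.e. the image in `ℚ(X)` of `det(1 - X·A)` equals
`∏_{k ≥ 1} (1 - X^k)^{b k}` for a finitely supported `b : ℕ → ℤ` with `b 0 = 0`).
Then the dimension over `ℚ` of the fixed subspace `{v : A·v = v}` (the kernel of the
linear map induced by `A - 1` on `ι → ℚ`) equals `∑_{k ≥ 1} b(k)`. -/
theorem fake_monster.stmt14 {ι : Type*} [Fintype ι] [DecidableEq ι]
    (A : Matrix ι ι ℚ) (hfin : ∃ r : ℕ, 0 < r ∧ A ^ r = 1)
    (b : ℕ →₀ ℤ) (hb0 : b 0 = 0)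
    (hshape : algebraMap (Polynomial ℚ) (RatFunc ℚ) A.charpolyRev =
      ∏ k ∈ b.support, ((1 : RatFunc ℚ) - RatFunc.X ^ k) ^ (b k)) :
    (Module.finrank ℚ (LinearMap.ker (Matrix.mulVecLin (A - 1))) : ℤ) =
      ∑ k ∈ b.support, b k := by
  obtain ⟨r, hr, hA⟩ := hfin
  rw [finrank_fixed_eq A r hr hA]
  apply ordOne_poly
  rw [hshape]
  refine ordOne_prod _ _ _ fun k hk => ?_
  have hk0 : k ≠ 0 := by
    rintro rfl
    exact (Finsupp.mem_support_iff.1 hk) hb0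
  simpa using ordOne_zpow (ordOne_base hk0) (b k)
end

section
/- Let ι be a finite type, let n be a positive integer, and let A : Matrix ι ι ℚ satisfy A^n = 1. If d and e are positive integers with gcd(d,n) = gcd(e,n), then A^d and A^e have the same characteristic polynomial, and their fixed subspaces coincide: {v : A^d·v = v} = {v : A^e·v = v}. -/
open Polynomial in
lemma det_aeval_eq_prod_roots {ι K : Type*} [Fintype ι] [DecidableEq ι] [Field K] [IsAlgClosed K]
    (M : Matrix ι ι K) (p : K[X]) :
    (aeval M p).det = (M.charpoly.roots.map (fun r => p.eval r)).prod := by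
  have hs : M.charpoly.Splits := IsAlgClosed.splits _
  have hcard : M.charpoly.roots.card = Fintype.card ι := by
    rw [← hs.natDegree_eq_card_roots, M.charpoly_natDegree_eq_dim]
  have hev : ∀ a : K, (M.charpoly.roots.map (fun r => a - r)).prod = M.charpoly.eval a := by
    intro a
    conv_rhs => rw [hs.eq_prod_roots_of_monic M.charpoly_monic]
    rw [eval_multiset_prod, Multiset.map_map]
    simp
  have hlin : ∀ a : K, (aeval M (X - C a)).det
      = (M.charpoly.roots.map (fun r => (X - C a).eval r)).prod := by
    intro a
    have h1 : (fun r : K => (X - C a).eval r) = fun r => (-1) * (a - r) := by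
      funext r; simp
    rw [h1, Multiset.prod_map_mul, hev, Matrix.eval_charpoly]
    simp only [Multiset.map_const', Multiset.prod_replicate, hcard]
    rw [← Matrix.det_smul]
    congr 1
    simp [Matrix.scalar_apply, Matrix.algebraMap_eq_diagonal, Pi.algebraMap_def]
  have hp : p.Splits := IsAlgClosed.splits p
  rw [hp.eq_prod_roots]
  generalize p.roots = s
  generalize p.leadingCoeff = c
  induction s using Multiset.induction_on with
  | empty =>
    simp [hcard, Matrix.algebraMap_eq_diagonal, Pi.algebraMap_def]
  | cons a s ih =>
    have : C c * (Multiset.map (fun a => X - C a) (a ::ₘ s)).prod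
        = (X - C a) * (C c * (Multiset.map (fun a => X - C a) s).prod) := by
      simp only [Multiset.map_cons, Multiset.prod_cons]; ring
    rw [this]
    simp only [map_mul (aeval M) (X - C a), Matrix.det_mul, ih, hlin, eval_mul (p := X - C a)]
    rw [Multiset.prod_map_mul]

lemma normal_closure_aux (k : Type*) [Field k] : Normal k (AlgebraicClosure k) :=
  IsAlgClosure.normal k (AlgebraicClosure k)

open Polynomial in
lemma charpoly_pow_coprime {ι : Type*} [Fintype ι] [DecidableEq ι]
    (n : ℕ) (hn : 0 < n) (M : Matrix ι ι ℚ) (hM : M ^ n = 1) (k : ℕ) (hk : k.Coprime n) :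
    (M ^ k).charpoly = M.charpoly := by
  have : NeZero n := ⟨hn.ne'⟩
  let K := AlgebraicClosure ℚ
  have hnorm : Normal ℚ K := by
    have h0 := normal_closure_aux ℚ
    convert h0
    exact Subsingleton.elim _ _
  obtain ⟨ζ, hζ⟩ := HasEnoughRootsOfUnity.exists_primitiveRoot K n
  have hmin : IsConjRoot ℚ (ζ ^ k) ζ := by
    rw [IsConjRoot, ← cyclotomic_eq_minpoly_rat hζ hn,
      ← cyclotomic_eq_minpoly_rat (hζ.pow_of_coprime k hk) hn]
  obtain ⟨σ, hσ⟩ := hmin.exists_algEquiv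
  let f := algebraMap ℚ K
  let N : Matrix ι ι K := f.mapMatrix M
  have hN : N ^ n = 1 := by rw [← map_pow, hM, map_one]
  have hroot : ∀ r ∈ N.charpoly.roots, r ^ k = σ r := by
    intro r hr
    have hr' : r ∈ spectrum K N :=
      Matrix.mem_spectrum_of_isRoot_charpoly (isRoot_of_mem_roots hr)
    have h2 : r ^ n = 1 := by
      have h3 := spectrum.pow_mem_pow N n hr'
      rw [hN] at h3
      by_contra hne
      rw [spectrum.mem_iff] at h3
      apply h3
      have : (algebraMap K (Matrix ι ι K)) (r ^ n) - 1 = algebraMap K _ (r ^ n - 1) := by simp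
      rw [this]
      exact (IsUnit.mk0 _ (sub_ne_zero.mpr hne)).map _
    obtain ⟨i, -, rfl⟩ := hζ.eq_pow_of_pow_eq_one h2
    rw [map_pow, hσ, ← pow_mul, ← pow_mul, mul_comm]
  have key : ∀ (P : Matrix ι ι ℚ) (t : ℚ),
      f (P.charpoly.eval t) = (aeval (f.mapMatrix P) (C (f t) - X)).det := by
    intro P t
    rw [Matrix.eval_charpoly, RingHom.map_det]
    congr 1
    simp only [map_sub, aeval_C, aeval_X]
    congr 1
    ext i j
    simp [Matrix.scalar_apply, Matrix.algebraMap_matrix_apply, Matrix.diagonal_apply, apply_ite f]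
  refine Polynomial.funext fun t => f.injective ?_
  have e1 : f ((M ^ k).charpoly.eval t) = (aeval N (C (f t) - X ^ k)).det := by
    rw [key, map_pow]; simp [N]
  have e2 : f (M.charpoly.eval t) = (aeval N (C (f t) - X)).det := key M t
  have e3 : σ (f (M.charpoly.eval t)) = f (M.charpoly.eval t) := σ.commutes _
  rw [e1, ← e3, e2, det_aeval_eq_prod_roots, det_aeval_eq_prod_roots, map_multiset_prod,
    Multiset.map_map]
  congr 1
  refine Multiset.map_congr rfl fun r hr => ?_
  have : σ (f t) = f t := σ.commutes _
  simp [hroot r hr, this]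

lemma exists_coprime_mul {n d e : ℕ} (hn : 0 < n) (h : Nat.gcd d n = Nat.gcd e n) :
    ∃ k : ℕ, k.Coprime n ∧ d * k ≡ e [MOD n] := by
  have : NeZero n := ⟨hn.ne'⟩
  have key : ∀ d : ℕ, ∃ u : (ZMod n)ˣ, (d : ZMod n) = u * (Nat.gcd d n : ℕ) := by
    intro d
    have hg : 0 < Nat.gcd d n := Nat.gcd_pos_of_pos_right _ hn
    obtain ⟨a, ha⟩ := Nat.gcd_dvd_left d n
    obtain ⟨m, hm⟩ := Nat.gcd_dvd_right d n
    have hc : Nat.Coprime a m := by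
      have := Nat.coprime_div_gcd_div_gcd hg
      rwa [Nat.div_eq_of_eq_mul_right hg ha, Nat.div_eq_of_eq_mul_right hg hm] at this
    have hmn : m ∣ n := ⟨_, by rw [mul_comm]; exact hm⟩
    obtain ⟨u, hu⟩ := ZMod.unitsMap_surjective hmn (ZMod.unitOfCoprime a hc)
    refine ⟨u, ?_⟩
    have h1 : ((u : ZMod n).val : ZMod m) = (a : ZMod m) := by
      have := congrArg (Units.val) hu
      simpa [ZMod.unitsMap_def, ZMod.castHom_apply, ZMod.natCast_val] using this
    rw [ZMod.natCast_eq_natCast_iff] at h1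
    have h2 := h1.mul_left' (Nat.gcd d n)
    rw [← hm, ← ha] at h2
    have h3 := (ZMod.natCast_eq_natCast_iff _ _ _).mpr h2
    rw [← h3]
    simp [mul_comm]
  obtain ⟨u, hu⟩ := key d
  obtain ⟨v, hv⟩ := key e
  refine ⟨((u⁻¹ * v : (ZMod n)ˣ) : ZMod n).val, ZMod.val_coe_unit_coprime _, ?_⟩
  rw [← ZMod.natCast_eq_natCast_iff, hv, ← h]
  push_cast
  rw [hu, ZMod.natCast_val, ZMod.cast_id]
  rw [mul_right_comm, ← Units.val_mul]; simp

lemma pow_eq_of_modEq {R : Type*} [Monoid R] {A : R} {n a b : ℕ} (hA : A ^ n = 1)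
    (h : a ≡ b [MOD n]) : A ^ a = A ^ b := by
  rw [pow_eq_pow_mod a hA, pow_eq_pow_mod b hA, h]

lemma fixed_le {ι : Type*} [Fintype ι] [DecidableEq ι] (B : Matrix ι ι ℚ) (k : ℕ) :
    LinearMap.ker (Matrix.mulVecLin (B - 1)) ≤ LinearMap.ker (Matrix.mulVecLin (B ^ k - 1)) := by
  intro v hv
  obtain ⟨Q, hQ⟩ : ∃ Q, B ^ k - 1 = Q * (B - 1) := ⟨_, (geom_sum_mul B k).symm⟩
  rw [LinearMap.mem_ker, Matrix.mulVecLin_apply] at hv ⊢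
  rw [hQ, ← Matrix.mulVec_mulVec, hv, Matrix.mulVec_zero]

/-- Let `A` be a square matrix over `ℚ` with `A^n = 1` for a positive
integer `n`.  If `d` and `e` are positive integers with `gcd(d,n) = gcd(e,n)`, then `A^d`
and `A^e` have the same characteristic polynomial and the same fixed subspace
`{v : A^d·v = v} = {v : A^e·v = v}` (kernels of the maps induced by `A^d - 1` and
`A^e - 1` on `ι → ℚ`). -/
theorem fake_monster.stmt15 {ι : Type*} [Fintype ι] [DecidableEq ι]
    (n : ℕ) (hn : 0 < n) (A : Matrix ι ι ℚ) (hA : A ^ n = 1)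
    (d e : ℕ) (hd : 0 < d) (he : 0 < e) (h : Nat.gcd d n = Nat.gcd e n) :
    (A ^ d).charpoly = (A ^ e).charpoly ∧
      LinearMap.ker (Matrix.mulVecLin (A ^ d - 1)) =
        LinearMap.ker (Matrix.mulVecLin (A ^ e - 1)) := by

  obtain ⟨k, hk, hke⟩ := exists_coprime_mul hn h
  obtain ⟨l, hl, hld⟩ := exists_coprime_mul hn h.symm
  have h1 : A ^ e = (A ^ d) ^ k := by rw [← pow_mul, pow_eq_of_modEq hA hke]
  have h2 : A ^ d = (A ^ e) ^ l := by rw [← pow_mul, pow_eq_of_modEq hA hld]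
  refine ⟨?_, le_antisymm ?_ ?_⟩
  · rw [h1]
    exact (charpoly_pow_coprime n hn (A ^ d)
      (by rw [← pow_mul, mul_comm, pow_mul, hA, one_pow]) k hk).symm
  · conv_rhs => rw [h1]
    exact fixed_le _ _
  · conv_rhs => rw [h2]
    exact fixed_le _ _
end
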